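/- For every d, m, r ∈ ℕ and every ε > 0 there exists n ∈ ℕ such that for every coloring c of the set of linear isometric embeddings of ℓ∞^d(ℝ) into ℓ∞^n(ℝ) with r colors, there exist a linear isometric embedding γ : ℓ∞^m(ℝ) → ℓ∞^n(ℝ) and a color j such that for every linear isometric embedding η : ℓ∞^d(ℝ) → ℓ∞^m(ℝ) there is a linear isometric embedding ξ : ℓ∞^d(ℝ) → ℓ∞^n(ℝ) with c(ξ) = j and ‖γ ∘ η − ξ‖ ≤ ε (operator norm). -/

import Mathlib

/-- `ℓ∞ⁿ(ℝ)`: the space `ℝⁿ` with the supremum norm. -/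
abbrev LinfR (n : ℕ) : Type := PiLp ⊤ (fun _ : Fin n => ℝ)

/-!
A linear map into `ℓ∞ⁿ` is a tuple of `n` functionals. Round the functionals in the unit ball of the
dual of the domain to a finite net `D 0 = 0, D 1, …` listed by increasing norm, so that isometries
into `ℓ∞ⁿ` become words of length `n`. For `η : E → F` consider the functionals `p ∘ η`, where `p`
runs through a net of the ball of radius `‖D 1‖` in the dual of `F`, then through one of radius
`‖D 2‖`, and so on. Composition with `η` does not increase norms and, by Hahn–Banach, every `D k` is
some `p ∘ η` with `‖p‖ ≤ ‖D k‖`; hence the `k`-th block can be rounded to `D 0, …, D k` with `D k`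
used for the first time. So `η` becomes a word in which the letters `1, 2, …` first occur in
increasing order, `γ ∘ η` corresponds to substitution of this word into the one of `γ`, and the
Graham–Rothschild theorem for such words yields the monochromatic `γ`.

The Graham–Rothschild theorem is proved by decreasing induction on the number `a` of constants,
starting from the Hales–Jewett theorem. The case of `a + 1` constants makes the colour of a word
depend only on the constants before its first parameter. A second use of Hales–Jewett makes it
depend only on how many of them there are, and the pigeonhole principle removes this dependence.
-/

universe u

/-- Graham–Rothschild parameter words: the letters of `w` are the constants `0, …, a - 1` and the
parameters `a, …, k - 1`, each parameter occurs, and their first occurrences are in increasing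
order. Equivalently, `0, …, a - 1` followed by `w` is a rigid surjection onto `{0, …, k - 1}`. -/
inductive ParameterWord : ℕ → ℕ → List ℕ → Prop
  | nil (a : ℕ) : ParameterWord a a []
  | const {a k b : ℕ} {w : List ℕ} : b < a → ParameterWord a k w → ParameterWord a k (b :: w)
  | param {a k : ℕ} {w : List ℕ} : ParameterWord (a + 1) k w → ParameterWord a k (a :: w)

/-- Substitution of the word `τ` for the parameters `a, a + 1, …`, as a map of letters; the
composition of parameter words is `σ.map (fill a τ)`. Letters beyond `a + τ.length` go to `0`. -/
def fill (a : ℕ) (τ : List ℕ) (x : ℕ) : ℕ := if x < a then x else τ.getD (x - a) 0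

namespace ParameterWord

variable {a b k : ℕ} {w w' : List ℕ}

lemma le (h : ParameterWord a k w) : a ≤ k := by
  induction h <;> omega

lemma lt_of_mem (h : ParameterWord a k w) {x : ℕ} (hx : x ∈ w) : x < k := by
  induction h with
  | nil => simp at hx
  | const hb h ih => exact (List.mem_cons.1 hx).elim (fun e => e ▸ hb.trans_le h.le) ih
  | param h ih => exact (List.mem_cons.1 hx).elim (fun e => e ▸ h.le) ih

lemma of_forall_lt (h : ∀ x ∈ w, x < a) : ParameterWord a a w := by
  induction w with
  | nil => exact nil a
  | cons x w ih =>
    rw [List.forall_mem_cons] at h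
    exact const h.1 (ih h.2)

lemma append (h : ParameterWord a b w) (h' : ParameterWord b k w') :
    ParameterWord a k (w ++ w') := by
  induction h with
  | nil => exact h'
  | const hb _ ih => exact const hb (ih h')
  | param _ ih => exact param (ih h')

lemma singleton (a : ℕ) : ParameterWord a (a + 1) [a] := param (nil _)

lemma range' (a q : ℕ) : ParameterWord a (a + q) (List.range' a q) := by
  induction q generalizing a with
  | zero => exact nil a
  | succ q ih =>
    rw [List.range'_succ, ← Nat.add_assoc, Nat.add_right_comm]
    exact param (ih (a + 1))

lemma exists_eq_append_cons (h : ParameterWord a k w) {x : ℕ} (hax : a ≤ x) (hxk : x < k) :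
    ∃ u v, w = u ++ x :: v ∧ ParameterWord a x u ∧ ParameterWord (x + 1) k v := by
  induction h with
  | nil => omega
  | const hb _ ih =>
    obtain ⟨u, v, rfl, hu, hv⟩ := ih hax hxk
    exact ⟨_ :: u, v, rfl, const hb hu, hv⟩
  | @param a k w h ih =>
    rcases hax.eq_or_lt with rfl | hax
    · exact ⟨[], w, rfl, nil a, h⟩
    · obtain ⟨u, v, rfl, hu, hv⟩ := ih hax hxk
      exact ⟨a :: u, v, rfl, param hu, hv⟩

lemma mem (h : ParameterWord a k w) {x : ℕ} (hax : a ≤ x) (hxk : x < k) : x ∈ w := by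
  obtain ⟨u, v, rfl, -⟩ := h.exists_eq_append_cons hax hxk
  simp

lemma of_forall_lt_succ_of_mem (h : ∀ x ∈ w, x < a + 1) (ha : a ∈ w) :
    ParameterWord a (a + 1) w := by
  induction w with
  | nil => simp at ha
  | cons x w ih =>
    rw [List.forall_mem_cons] at h
    rcases (Nat.lt_succ_iff.1 h.1).lt_or_eq with hx | rfl
    · exact const hx (ih h.2 (List.mem_of_ne_of_mem hx.ne' ha))
    · exact param (of_forall_lt h.2)

lemma map {a' k' m : ℕ} {σ : List ℕ} {f : ℕ → ℕ} (hσ : ParameterWord a m σ)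
    (hf : ∀ x < a, f x < a') (hparam : ParameterWord a' k' ((List.range' a (m - a)).map f)) :
    ParameterWord a' k' (σ.map f) := by
  induction hσ generalizing a' with
  | nil => simpa using hparam
  | const hb _ ih => exact const (hf _ hb) (ih hf hparam)
  | @param a m σ hσ ih =>
    have hm : m - a = (m - (a + 1)) + 1 := by have := hσ.le; omega
    rw [hm, List.range'_succ, List.map_cons] at hparam
    rw [List.map_cons]
    generalize hfa : f a = y at hparam ⊢
    have hf_succ {c : ℕ} (hc : a' ≤ c) (hy : y < c) : ∀ x < a + 1, f x < c := fun x hx =>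
      (Nat.lt_succ_iff_lt_or_eq.1 hx).elim (fun h => (hf x h).trans_le hc) (by rintro rfl; omega)
    cases hparam with
    | const hb h => exact const hb (ih (hf_succ le_rfl hb) h)
    | param h => exact param (ih (hf_succ (Nat.le_succ _) (Nat.lt_succ_self _)) h)

end ParameterWord

section Fill

variable {a x : ℕ} {u τ σ w : List ℕ}

lemma fill_of_lt (τ : List ℕ) (hx : x < a) : fill a τ x = x := if_pos hx

lemma fill_of_le (τ : List ℕ) (hx : a ≤ x) : fill a τ x = τ.getD (x - a) 0 :=
  if_neg hx.not_gt

lemma map_fill_of_forall_lt (τ : List ℕ) (hw : ∀ x ∈ w, x < a) : w.map (fill a τ) = w :=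
  (List.map_congr_left fun x hx => fill_of_lt τ (hw x hx)).trans (List.map_id' w)

lemma map_fill_range' (a : ℕ) (τ : List ℕ) : (List.range' a τ.length).map (fill a τ) = τ := by
  refine List.ext_getElem (by simp) fun i _ hi => ?_
  simp [fill, hi]

lemma map_fill_range'_succ (a b : ℕ) (τ : List ℕ) :
    (List.range' (a + 1) τ.length).map (fill a (b :: τ)) = τ := by
  have h := map_fill_range' a (b :: τ)
  rw [List.length_cons, List.range'_succ, List.map_cons] at h
  exact (List.cons.inj h).2

lemma fill_append_of_lt (v : List ℕ) (hx : x < a + u.length) :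
    fill a (u ++ v) x = fill a u x := by
  unfold fill
  split_ifs
  · rfl
  · exact List.getD_append _ _ _ _ (by omega)

lemma fill_append_cons_add_length (a : ℕ) (u v : List ℕ) (x : ℕ) :
    fill a (u ++ x :: v) (a + u.length) = x := by
  simp [fill]

lemma fill_cons_self (a : ℕ) (τ : List ℕ) : fill a (x :: τ) a = x := by
  simp [fill]

lemma fill_cons_self_eq (a : ℕ) (τ : List ℕ) : fill a (a :: τ) = fill (a + 1) τ := by
  funext x
  rcases lt_trichotomy x a with hx | rfl | hx
  · rw [fill_of_lt _ hx, fill_of_lt _ (by omega)]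
  · rw [fill_cons_self, fill_of_lt _ (by omega)]
  · obtain ⟨i, rfl⟩ := Nat.exists_eq_add_of_lt hx
    rw [fill_of_le _ (by omega), fill_of_le _ (by omega), show a + i + 1 - a = i + 1 by omega,
      show a + i + 1 - (a + 1) = i by omega, List.getD_cons_succ]

lemma fill_comp_fill (ha : 0 < a) (τ σ : List ℕ) :
    fill a τ ∘ fill a σ = fill a (σ.map (fill a τ)) := by
  funext x
  rcases lt_or_ge x a with hx | hx
  · simp [fill_of_lt _ hx]
  · have hmap := List.getD_map σ 0 (n := x - a) (fill a τ)
    rw [fill_of_lt τ ha] at hmap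
    rw [Function.comp_apply, fill_of_le σ hx, fill_of_le _ hx, hmap]

lemma ParameterWord.map_fill {k m : ℕ} (hσ : ParameterWord a m σ) (hτ : ParameterWord a k τ)
    (hm : m = a + τ.length) : ParameterWord a k (σ.map (fill a τ)) := by
  refine hσ.map (fun x hx => (fill_of_lt τ hx).trans_lt hx) ?_
  rwa [hm, Nat.add_sub_cancel_left, map_fill_range']

end Fill

section TakeWhile

variable {α : Type*} {p : α → Bool} {l : List α}

lemma exists_eq_takeWhile_append_cons (h : ∃ x ∈ l, p x = false) :
    ∃ x v, p x = false ∧ l = l.takeWhile p ++ x :: v := by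
  have hne : l.dropWhile p ≠ [] := by simpa [List.dropWhile_eq_nil_iff] using h
  refine ⟨_, (l.dropWhile p).tail, List.head_dropWhile_not p hne, ?_⟩
  rw [List.cons_head_tail, List.takeWhile_append_dropWhile]

lemma length_takeWhile_lt_of_exists (h : ∃ x ∈ l, p x = false) :
    (l.takeWhile p).length < l.length := by
  obtain ⟨x, v, -, hl⟩ := exists_eq_takeWhile_append_cons h
  conv_rhs => rw [hl]
  simp

lemma takeWhile_append_of_exists (h : ∃ x ∈ l, p x = false) (l' : List α) :
    (l ++ l').takeWhile p = l.takeWhile p := by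
  rw [List.takeWhile_append, if_neg (length_takeWhile_lt_of_exists h).ne]

lemma takeWhile_append_singleton {t : α} (hl : ∀ x ∈ l, p x) (ht : ¬p t) :
    (l ++ [t]).takeWhile p = l := by
  rw [List.takeWhile_append_of_pos hl, List.takeWhile_cons_of_neg ht, List.append_nil]

end TakeWhile

/-- The Graham–Rothschild theorem for the parameter words with letters below `k` over the
constants `0, …, a - 1`, the number of colours and the dimension `q` being arbitrary. -/
def GrahamRothschildProperty (a k : ℕ) : Prop :=
  ∀ (q : ℕ) (κ : Type u) [Finite κ], ∃ n, ∀ c : List ℕ → κ,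
    ∃ σ, ParameterWord a (a + q) σ ∧ σ.length = n ∧
      ∃ j, ∀ τ, ParameterWord a k τ → τ.length = q → c (σ.map (fill a τ)) = j

section HalesJewett

variable {a q : ℕ}

/-- Block of length `q` encoding one coordinate of a combinatorial line over the alphabet
`Fin q → Fin a`: a constant word at a fixed coordinate, all `q` parameters at a moving one. -/
def lineBlock : Option (Fin q → Fin a) → List ℕ
  | some g => List.ofFn fun t => (g t : ℕ)
  | none => List.range' a q

lemma length_lineBlock (o : Option (Fin q → Fin a)) : (lineBlock o).length = q := by
  cases o <;> simp [lineBlock]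

lemma map_fill_lineBlock (g : Fin q → Fin a) (o : Option (Fin q → Fin a)) :
    (lineBlock o).map (fill a (lineBlock (some g))) = lineBlock (some (o.getD g)) := by
  cases o with
  | some g' =>
    refine map_fill_of_forall_lt _ fun x hx => ?_
    obtain ⟨t, rfl⟩ := List.mem_ofFn.1 hx
    exact (g' t).isLt
  | none => simpa [lineBlock] using map_fill_range' a (lineBlock (some g))

lemma exists_lineBlock_eq {τ : List ℕ} (hτ : ParameterWord a a τ) (hlen : τ.length = q) :
    ∃ g : Fin q → Fin a, lineBlock (some g) = τ := by
  subst hlen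
  exact ⟨fun t => ⟨τ[t], hτ.lt_of_mem (List.getElem_mem _)⟩, List.ofFn_getElem⟩

lemma lt_of_mem_lineBlock {o : Option (Fin q → Fin a)} {x : ℕ} (hx : x ∈ lineBlock o) :
    x < a + q := by
  cases o with
  | some g =>
    obtain ⟨t, rfl⟩ := List.mem_ofFn.1 hx
    exact (g t).isLt.trans_le (Nat.le_add_right a q)
  | none => exact (List.mem_range'_1.1 hx).2

lemma parameterWord_flatMap_lineBlock {l : List (Option (Fin q → Fin a))} (hl : none ∈ l) :
    ParameterWord a (a + q) (l.flatMap lineBlock) := by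
  induction l with
  | nil => simp at hl
  | cons o l ih =>
    rw [List.flatMap_cons]
    cases o with
    | some g =>
      refine .append (.of_forall_lt fun x hx => ?_) (ih (by simpa using hl))
      obtain ⟨t, rfl⟩ := List.mem_ofFn.1 hx
      exact (g t).isLt
    | none =>
      refine .append (.range' a q) (.of_forall_lt fun x hx => ?_)
      obtain ⟨o, -, hx⟩ := List.mem_flatMap.1 hx
      exact lt_of_mem_lineBlock hx

lemma GrahamRothschildProperty.self (a : ℕ) : GrahamRothschildProperty.{u} a a := by
  intro q κ _
  obtain ⟨ι, _, hι⟩ := Combinatorics.Line.exists_mono_in_high_dimension (Fin q → Fin a) κ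
  let coords : List ι := Finset.univ.toList
  refine ⟨coords.length * q, fun c => ?_⟩
  obtain ⟨L, j, hj⟩ := hι fun x => c (coords.flatMap fun i => lineBlock (some (x i)))
  refine ⟨(coords.map L.idxFun).flatMap lineBlock, parameterWord_flatMap_lineBlock ?_, ?_, j,
    fun τ hτ hlen => ?_⟩
  · obtain ⟨i, hi⟩ := L.proper
    exact List.mem_map.2 ⟨i, by simp [coords], hi⟩
  · simp [List.length_flatMap, length_lineBlock, Function.comp_def]
  · obtain ⟨g, rfl⟩ := exists_lineBlock_eq hτ hlen
    rw [← hj g, List.map_flatMap, List.flatMap_map]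
    simp only [map_fill_lineBlock, Combinatorics.Line.apply_def]

end HalesJewett

section Step

variable {a k q : ℕ} {σ τ : List ℕ}

lemma ParameterWord.exists_le_mem_map_fill (hσ : ParameterWord a (a + τ.length) σ)
    (hτ : ∃ x ∈ τ, a ≤ x) : ∃ x ∈ σ.map (fill a τ), a ≤ x := by
  obtain ⟨x, hx, hax⟩ := hτ
  obtain ⟨i, hi, rfl⟩ := List.getElem_of_mem hx
  refine ⟨τ[i], List.mem_map.2 ⟨a + i, hσ.mem (by omega) (by omega), ?_⟩, hax⟩
  simp [fill, hi]

lemma ParameterWord.takeWhile_map_fill (hσ : ParameterWord a (a + τ.length) σ)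
    (hτ : ∃ x ∈ τ, a ≤ x) :
    (σ.map (fill a τ)).takeWhile (· < a) =
      (σ.map (fill a (τ.takeWhile (· < a) ++ [a]))).takeWhile (· < a) := by
  obtain ⟨x, v, hx, hv⟩ := exists_eq_takeWhile_append_cons (p := (· < a)) (by simpa using hτ)
  have hu : ∀ y ∈ τ.takeWhile (· < a), y < a := fun y hy => by
    simpa using List.mem_takeWhile_imp hy
  generalize τ.takeWhile (· < a) = u at hu hv ⊢
  subst hv
  obtain ⟨σ₁, σ₂, rfl, hσ₁, -⟩ :=
    hσ.exists_eq_append_cons (Nat.le_add_right a u.length) (by simp)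
  have hconst : ∀ z ∈ σ₁.map (fill a u), z < a := fun z =>
    (hσ₁.map_fill (.of_forall_lt hu) rfl).lt_of_mem
  have htakeWhile {z : ℕ} (hz : a ≤ z) (t : List ℕ) :
      ((σ₁ ++ (a + u.length) :: σ₂).map (fill a (u ++ z :: t))).takeWhile (· < a) =
        σ₁.map (fill a u) := by
    rw [List.map_append, List.map_cons, fill_append_cons_add_length,
      List.map_congr_left fun s hs => fill_append_of_lt (z :: t) (hσ₁.lt_of_mem hs),
      List.takeWhile_append_of_pos (by simpa using hconst),
      List.takeWhile_cons_of_neg (by simpa using hz), List.append_nil]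
  rw [htakeWhile (by simpa using hx), htakeWhile le_rfl]

lemma ParameterWord.map_fill_range'_succ (hσ : ParameterWord a (a + q) σ) :
    ParameterWord (a + 1) (a + 1 + q) (σ.map (fill a (List.range' (a + 1) q))) := by
  refine hσ.map (fun x hx => (fill_of_lt _ hx).trans_lt (hx.trans a.lt_succ_self)) ?_
  have hmap := map_fill_range' a (List.range' (a + 1) q)
  rw [List.length_range'] at hmap
  rw [Nat.add_sub_cancel_left, hmap]
  exact .range' (a + 1) q

lemma map_fill_cons_map_fill_succ (ha : 0 < a) (σ ρ τ : List ℕ) (t : ℕ) :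
    (a :: σ.map (fill (a + 1) ρ)).map (fill a (t :: τ)) =
      t :: σ.map (fill a (t :: ρ.map (fill a (t :: τ)))) := by
  rw [List.map_cons, fill_cons_self, List.map_map, ← fill_cons_self_eq, fill_comp_fill ha,
    List.map_cons, fill_cons_self]

-- The first letter of a word is either a constant, handled by the induction on `q` with colours
-- `Fin a → κ`, or the first parameter, handled by the property for `a + 1` constants.
lemma GrahamRothschildProperty.exists_color_eq_takeWhile (ha : 0 < a)
    (hG : GrahamRothschildProperty.{u} (a + 1) k) (q : ℕ) (κ : Type u) [Finite κ] :
    ∃ n, ∀ c : List ℕ → κ, ∃ σ, ParameterWord a (a + q) σ ∧ σ.length = n ∧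
      ∃ j : List ℕ → κ, ∀ τ, ParameterWord a k τ → τ.length = q →
        c (σ.map (fill a τ)) = j (τ.takeWhile (· < a)) := by
  induction q generalizing κ with
  | zero => exact ⟨0, fun c => ⟨[], .nil a, rfl, fun _ => c [], fun _ _ _ => rfl⟩⟩
  | succ q ih =>
    obtain ⟨n', hn'⟩ := ih (Fin a → κ)
    obtain ⟨n, hn⟩ := hG n' κ
    refine ⟨n + 1, fun c => ?_⟩
    obtain ⟨σ₁, hσ₁, hlen₁, j₁, hj₁⟩ := hn fun w => c (a :: w)
    obtain ⟨σ', hσ', hlen', j', hj'⟩ := hn' fun w b => c (b :: σ₁.map (fill a (b :: w)))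
    let shifted := σ'.map (fill a (List.range' (a + 1) q))
    have hshifted : ParameterWord (a + 1) (a + 1 + q) shifted := hσ'.map_fill_range'_succ
    have hlen_shifted : shifted.length = n' := by simp [shifted, hlen']
    refine ⟨a :: σ₁.map (fill (a + 1) shifted), ?_, by simp [hlen₁], fun
      | [] => j₁
      | b :: u => if hb : b < a then j' u ⟨b, hb⟩ else j₁, fun τ hτ hlen => ?_⟩
    · rw [← Nat.add_assoc, Nat.add_right_comm]
      exact .param (hσ₁.map_fill hshifted (by rw [hlen_shifted]))
    · cases hτ with
      | nil => simp at hlen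
      | @const _ _ b τ hb hτ =>
        have hlen : τ.length = q := by simpa using hlen
        have hshift : shifted.map (fill a (b :: τ)) = σ'.map (fill a τ) := by
          rw [List.map_map, fill_comp_fill ha, ← hlen, map_fill_range'_succ]
        rw [map_fill_cons_map_fill_succ ha, hshift, List.takeWhile_cons_of_pos (by simpa using hb)]
        simpa only [hb, dif_pos] using congrFun (hj' τ hτ hlen) ⟨b, hb⟩
      | @param _ _ τ hτ =>
        have hlen : τ.length = q := by simpa using hlen
        rw [map_fill_cons_map_fill_succ ha, fill_cons_self_eq, fill_cons_self_eq,
          List.takeWhile_cons_of_neg (by simp)]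
        exact hj₁ _ (hshifted.map_fill hτ (by rw [hlen])) (by simpa using hlen_shifted)

lemma ParameterWord.map_fill_append_singleton (hσ : ParameterWord a (a + τ.length) σ) (t : ℕ) :
    (σ ++ [a + τ.length]).map (fill a (τ ++ [t])) = σ.map (fill a τ) ++ [t] := by
  rw [List.map_append, List.map_singleton, fill_append_cons_add_length,
    List.map_congr_left fun x hx => fill_append_of_lt [t] (hσ.lt_of_mem hx)]

-- Parameters are appended one at a time: a new last parameter matters only when all earlier ones
-- receive constants, and then the Hales–Jewett case fixes the colour.
lemma exists_color_takeWhile_eq_length (ha : 0 < a) (q : ℕ) (κ : Type u) [Finite κ] :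
    ∃ n, ∀ f : List ℕ → κ, ∃ ρ, ParameterWord a (a + q) ρ ∧ ρ.length = n ∧
      ∃ j : ℕ → κ, ∀ τ : List ℕ, τ.length = q → (∃ x ∈ τ, a ≤ x) →
        f ((ρ.map (fill a τ)).takeWhile (· < a)) = j (τ.takeWhile (· < a)).length := by
  induction q with
  | zero => exact ⟨0, fun f => ⟨[], .nil a, rfl, fun _ => f [], fun _ _ _ => rfl⟩⟩
  | succ q ih =>
    obtain ⟨n', hn'⟩ := ih
    obtain ⟨n, hn⟩ := GrahamRothschildProperty.self.{u} a n' κ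
    refine ⟨n + 1, fun f => ?_⟩
    obtain ⟨σ, hσ, hlenσ, j, hj⟩ := hn f
    obtain ⟨ρ, hρ, rfl, j', hj'⟩ :=
      hn' fun u => f ((σ.map (fill a (u ++ [a]))).takeWhile (· < a))
    have hσρ : ParameterWord a (a + q) (σ.map (fill a ρ)) := hσ.map_fill hρ rfl
    refine ⟨σ.map (fill a ρ) ++ [a + q], hσρ.append (.singleton _), by simp [hlenσ],
      fun i => if i < q then j' i else j, fun τ hlen hτ => ?_⟩
    obtain ⟨τ, t, rfl⟩ := (List.eq_nil_or_concat' τ).resolve_left (by rintro rfl; simp at hlen)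
    obtain rfl : τ.length = q := by simpa using hlen
    let w := ρ.map (fill a τ)
    have hlenw : ρ.length = w.length := by simp [w]
    rw [hlenw] at hσ hj
    rw [hσρ.map_fill_append_singleton, List.map_map, fill_comp_fill ha]
    by_cases hparam : ∃ x ∈ τ, a ≤ x
    · have hw : ∃ x ∈ w, a ≤ x := hρ.exists_le_mem_map_fill hparam
      have hσw : ∃ x ∈ σ.map (fill a w), a ≤ x := hσ.exists_le_mem_map_fill hw
      rw [takeWhile_append_of_exists (by simpa only [decide_eq_false_iff_not, not_lt] using hσw),
        hσ.takeWhile_map_fill hw, hj' τ rfl hparam]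
      simp only [← not_lt, ← decide_eq_false_iff_not (p := _ < _)] at hparam
      rw [takeWhile_append_of_exists hparam]
      exact (if_pos (length_takeWhile_lt_of_exists hparam)).symm
    · have hτt : (∃ x ∈ τ, a ≤ x) ∨ a ≤ t := by simpa [or_and_right, exists_or] using hτ
      have ht := hτt.resolve_left hparam
      push Not at hparam
      have hw : ParameterWord a a w := hρ.map_fill (.of_forall_lt hparam) rfl
      have hσw : ∀ x ∈ σ.map (fill a w), x < a := fun x => (hσ.map_fill hw rfl).lt_of_mem
      rw [takeWhile_append_singleton (by simpa using hσw) (by simpa using ht),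
        takeWhile_append_singleton (by simpa using hparam) (by simpa using ht), hj w hw rfl]
      exact (if_neg (lt_irrefl _)).symm

lemma parameterWord_map_count (ha : 0 < a) (I : ℕ → Prop) [DecidablePred I] (M : ℕ) :
    ParameterWord a (a + Nat.count I M)
      ((List.range M).map fun i => if I i then a + Nat.count I i else 0) := by
  induction M with
  | zero => simpa using ParameterWord.nil a
  | succ M ih =>
    rw [List.range_succ, List.map_append, List.map_singleton, Nat.count_succ]
    refine ih.append ?_
    split_ifs
    · exact .singleton _
    · exact .of_forall_lt (by simp; omega)

lemma exists_subset_range_card_eq_of_coloring {κ : Type*} [Fintype κ] [Nonempty κ] (q : ℕ)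
    (f : ℕ → κ) :
    ∃ (j : κ) (I : Finset ℕ), I ⊆ Finset.range (Fintype.card κ * q) ∧ I.card = q ∧
      ∀ i ∈ I, f i = j := by
  classical
  obtain ⟨j, -, hj⟩ := Finset.exists_le_card_fiber_of_mul_le_card_of_maps_to
    (s := Finset.range (Fintype.card κ * q)) (t := Finset.univ) (f := f) (n := q)
    (fun _ _ => Finset.mem_univ _) Finset.univ_nonempty (by simp)
  obtain ⟨I, hI, hcard⟩ := Finset.exists_subset_card_eq hj
  exact ⟨j, I, hI.trans (Finset.filter_subset _ _), hcard,
    fun i hi => (Finset.mem_filter.1 (hI hi)).2⟩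

-- Unless `i ∈ I`, the letter at position `i` is `0` whatever is substituted, so the
-- constant prefix of a substituted word can only stop at a position in `I`.
lemma exists_parameterWord_length_takeWhile_mem (ha : 0 < a) {I : Finset ℕ} {M : ℕ}
    (hI : I ⊆ Finset.range M) :
    ∃ ρ, ParameterWord a (a + I.card) ρ ∧ ρ.length = M ∧
      ∀ τ, (∃ x ∈ ρ.map (fill a τ), a ≤ x) →
        ((ρ.map (fill a τ)).takeWhile (· < a)).length ∈ I := by
  have hcount : Nat.count (· ∈ I) M = I.card := by
    rw [Nat.count_eq_card_filter_range, Finset.filter_mem_eq_inter, Finset.inter_eq_right.2 hI]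
  refine ⟨_, hcount ▸ parameterWord_map_count ha (· ∈ I) M, by simp, fun τ hτ => ?_⟩
  rw [List.map_map] at hτ ⊢
  obtain ⟨x, v, hx, hv⟩ := exists_eq_takeWhile_append_cons (p := (· < a))
    (by simpa only [decide_eq_false_iff_not, not_lt] using hτ)
  generalize List.takeWhile _ _ = u at hv ⊢
  by_contra hu
  have hM : M = u.length + (v.length + 1) := by simpa using congrArg List.length hv
  have hlen : u.length < M := by omega
  obtain rfl : 0 = x := by
    simpa [hu, hlen, fill_of_lt _ ha] using congrArg (·[u.length]?) hv
  simp [ha] at hx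

lemma GrahamRothschildProperty.of_succ (ha : 0 < a) (hak : a < k)
    (hG : GrahamRothschildProperty.{u} (a + 1) k) : GrahamRothschildProperty.{u} a k := by
  intro q κ _
  have := Fintype.ofFinite κ
  obtain ⟨N, hN⟩ := exists_color_takeWhile_eq_length ha (Fintype.card κ * q) κ
  obtain ⟨n, hn⟩ := hG.exists_color_eq_takeWhile ha N κ
  refine ⟨n, fun c => ?_⟩
  have : Nonempty κ := ⟨c []⟩
  obtain ⟨σ, hσ, hlenσ, jσ, hjσ⟩ := hn c
  obtain ⟨ρ, hρ, hlenρ, jρ, hjρ⟩ := hN jσ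
  obtain ⟨j, I, hI, hcard, hj⟩ := exists_subset_range_card_eq_of_coloring q jρ
  obtain ⟨ν, hν, hlenν, hmem⟩ := exists_parameterWord_length_takeWhile_mem ha hI
  rw [hcard] at hν
  have hρν : ParameterWord a (a + q) (ρ.map (fill a ν)) := hρ.map_fill hν (by rw [hlenν])
  refine ⟨σ.map (fill a (ρ.map (fill a ν))), hσ.map_fill hρν (by simp [hlenρ]), by simpa,
    j, fun τ hτ hlen => ?_⟩
  let w := ν.map (fill a τ)
  have hw : ParameterWord a k w := hν.map_fill hτ (by rw [hlen])
  have hlenw : w.length = Fintype.card κ * q := by simpa [w]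
  have hparam : ∃ x ∈ w, a ≤ x := ⟨a, hw.mem le_rfl hak, le_rfl⟩
  calc c ((σ.map (fill a (ρ.map (fill a ν)))).map (fill a τ))
      = c (σ.map (fill a (ρ.map (fill a w)))) := by
        simp only [List.map_map, fill_comp_fill ha, w]
    _ = jσ ((ρ.map (fill a w)).takeWhile (· < a)) :=
        hjσ _ (hρ.map_fill hw (by rw [hlenw])) (by simpa)
    _ = jρ (w.takeWhile (· < a)).length := hjρ w hlenw hparam
    _ = j := hj _ (hmem τ hparam)

theorem grahamRothschildProperty (ha : 0 < a) (hak : a ≤ k) :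
    GrahamRothschildProperty.{u} a k := by
  obtain ⟨d, rfl⟩ := Nat.exists_eq_add_of_le hak
  clear hak
  induction d generalizing a with
  | zero => exact .self a
  | succ d ih =>
    refine .of_succ ha (by omega) ?_
    rw [show a + (d + 1) = a + 1 + d by omega]
    exact ih a.succ_pos

end Step

section Net

variable {V : Type*} [NormedAddCommGroup V] [ProperSpace V] {ε : ℝ}

lemma exists_finset_net_closedBall (ρ : ℝ) (hε : 0 < ε) :
    ∃ t : Finset V, (∀ y ∈ t, ‖y‖ ≤ ρ) ∧ ∀ x, ‖x‖ ≤ ρ → ∃ y ∈ t, ‖x - y‖ ≤ ε := by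
  obtain ⟨t, ht, htf, hcover⟩ := (isCompact_closedBall (0 : V) ρ).finite_cover_balls hε
  refine ⟨htf.toFinset, fun y hy => by simpa using ht (htf.mem_toFinset.1 hy), fun x hx => ?_⟩
  obtain ⟨y, hy, hxy⟩ := Set.mem_iUnion₂.1 (hcover (mem_closedBall_zero_iff.2 hx))
  exact ⟨y, htf.mem_toFinset.2 hy, (mem_ball_iff_norm.1 hxy).le⟩

-- A point of norm above `ε` is first shrunk by `ε / 2` and then approximated up to `ε / 4`.
lemma exists_finset_net_closedBall_norm_lt [NormedSpace ℝ V] (hε : 0 < ε) :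
    ∃ t : Finset V, 0 ∈ t ∧ (∀ y ∈ t, ‖y‖ ≤ 1) ∧
      ∀ x, ‖x‖ ≤ 1 → ∃ y ∈ t, ‖x - y‖ ≤ ε ∧ (y = 0 ∨ ‖y‖ < ‖x‖) := by
  classical
  obtain ⟨t, ht, hnet⟩ := exists_finset_net_closedBall (V := V) 1 (show 0 < ε / 4 by positivity)
  refine ⟨insert 0 t, Finset.mem_insert_self 0 t, by simpa using ht, fun x hx => ?_⟩
  rcases le_or_gt ‖x‖ ε with hxε | hxε
  · exact ⟨0, by simp, by simpa using hxε, .inl rfl⟩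
  have hx₀ : 0 < ‖x‖ := hε.trans hxε
  let x' := (1 - ε / 2 / ‖x‖) • x
  have hsub : ‖x - x'‖ = ε / 2 := by
    have : x - x' = (ε / 2 / ‖x‖) • x := by simp only [x']; module
    rw [this, norm_smul, Real.norm_of_nonneg (by positivity), div_mul_cancel₀ _ hx₀.ne']
  have hx' : ‖x'‖ = ‖x‖ - ε / 2 := by
    have : 0 ≤ 1 - ε / 2 / ‖x‖ := by rw [sub_nonneg, div_le_one hx₀]; linarith
    rw [norm_smul, Real.norm_of_nonneg this, sub_mul, div_mul_cancel₀ _ hx₀.ne', one_mul]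
  obtain ⟨y, hy, hxy⟩ := hnet x' (by linarith)
  refine ⟨y, Finset.mem_insert_of_mem hy, ?_, .inr ?_⟩
  · linarith [norm_sub_le_norm_sub_add_norm_sub x x' y]
  · linarith [norm_le_norm_add_norm_sub x' y]

lemma exists_monotoneOn_enumeration {α β : Type*} [LinearOrder β] {s : Finset α}
    (hs : s.Nonempty) (f : α → β) : ∃ (D : ℕ → α) (K : ℕ), 0 < K ∧ (∀ i, D i ∈ s) ∧
      (∀ x ∈ s, ∃ i < K, D i = x) ∧ MonotoneOn (f ∘ D) (Set.Iio K) := by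
  obtain ⟨x₀, hx₀⟩ := hs
  let e : Fin s.card ≃ s := (Tuple.sort fun i => f (s.equivFin.symm i)).trans s.equivFin.symm
  have he : Monotone fun i => f (e i) := Tuple.monotone_sort fun i => f (s.equivFin.symm i)
  refine ⟨fun i => if h : i < s.card then e ⟨i, h⟩ else x₀, s.card, Finset.card_pos.2 ⟨x₀, hx₀⟩,
    fun i => ?_, fun x hx => ⟨e.symm ⟨x, hx⟩, Fin.is_lt _, by simp⟩, fun i hi j hj hij => ?_⟩
  · dsimp only
    split_ifs
    exacts [Subtype.coe_prop _, hx₀]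
  · simpa [Set.mem_Iio.1 hi, Set.mem_Iio.1 hj] using
      he (show (⟨i, hi⟩ : Fin s.card) ≤ ⟨j, hj⟩ from hij)

lemma exists_norm_monotone_net [NormedSpace ℝ V] (hε : 0 < ε) {S : Finset V}
    (hS : ∀ f ∈ S, ‖f‖ ≤ 1) : ∃ (D : ℕ → V) (K : ℕ), 0 < K ∧ D 0 = 0 ∧ (∀ i, ‖D i‖ ≤ 1) ∧
      (∀ f ∈ S, ∃ i < K, D i = f) ∧ (∀ x, ‖x‖ ≤ 1 → ∃ i < K, ‖x - D i‖ ≤ ε) ∧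
      ∀ k < K, 0 < k → ∀ x, ‖x‖ ≤ ‖D k‖ → ∃ i < k, ‖x - D i‖ ≤ ε := by
  classical
  obtain ⟨t, ht₀, ht, hnet⟩ := exists_finset_net_closedBall_norm_lt (V := V) hε
  obtain ⟨D, K, hK, hmem, hsurj, hmono⟩ :=
    exists_monotoneOn_enumeration ⟨0, Finset.mem_union_left S ht₀⟩ norm
  have hD (i : ℕ) : ‖D i‖ ≤ 1 := (Finset.mem_union.1 (hmem i)).elim (ht _) (hS _)
  have hsurj_net {y : V} (hy : y ∈ t) : ∃ i < K, D i = y :=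
    hsurj y (Finset.mem_union_left S hy)
  have hD₀ : D 0 = 0 := by
    obtain ⟨i, hi, hi₀⟩ := hsurj_net ht₀
    simpa [hi₀] using hmono (Set.mem_Iio.2 hK) hi (Nat.zero_le i)
  refine ⟨D, K, hK, hD₀, hD, fun f hf => hsurj f (Finset.mem_union_right t hf), fun x hx => ?_,
    fun k hk hk₀ x hx => ?_⟩
  · obtain ⟨y, hy, hxy, -⟩ := hnet x hx
    obtain ⟨i, hi, rfl⟩ := hsurj_net hy
    exact ⟨i, hi, hxy⟩
  · obtain ⟨y, hy, hxy, rfl | hlt⟩ := hnet x (hx.trans (hD k))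
    · exact ⟨0, hk₀, hD₀ ▸ hxy⟩
    · obtain ⟨i, hi, rfl⟩ := hsurj_net hy
      exact ⟨i, lt_of_not_ge fun hki => (hlt.trans_le hx).not_ge (hmono hk hi hki), hxy⟩

end Net

section Norming

variable {E : Type*} [NormedAddCommGroup E] [NormedSpace ℝ E] {n : ℕ}

lemma norm_le_of_forall_abs_le {x : LinfR n} {C : ℝ} (hC : 0 ≤ C) (h : ∀ i, |x i| ≤ C) :
    ‖x‖ ≤ C := by
  rw [PiLp.norm_eq_ciSup]
  exact Real.iSup_le h hC

/-- A set of functionals of norm at most one that computes the norm of every vector. The zero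
vector is exempt, so that the empty set is norming for the trivial space. -/
def IsNorming (S : Set (E →L[ℝ] ℝ)) : Prop :=
  (∀ f ∈ S, ‖f‖ ≤ 1) ∧ ∀ x ≠ 0, ∃ f ∈ S, ‖x‖ ≤ |f x|

lemma IsNorming.mono {S T : Set (E →L[ℝ] ℝ)} (hS : IsNorming S) (hST : S ⊆ T)
    (hT : ∀ f ∈ T, ‖f‖ ≤ 1) : IsNorming T :=
  ⟨hT, fun x hx => (hS.2 x hx).imp fun _ hf => ⟨hST hf.1, hf.2⟩⟩

lemma IsNorming.image_getD_cons_zero {R : List (E →L[ℝ] ℝ)} (hR : IsNorming {p | p ∈ R}) :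
    IsNorming ((fun i => (0 :: R).getD i 0) '' Set.Iio (1 + R.length)) := by
  refine hR.mono (fun p hp => ?_) ?_
  · obtain ⟨i, hi, rfl⟩ := List.getElem_of_mem hp
    exact ⟨i + 1, Set.mem_Iio.2 (by omega), by simp [hi]⟩
  · rintro _ ⟨i, hi, rfl⟩
    rcases i with - | i
    · simp
    · have hi : i < R.length := by
        have := Set.mem_Iio.1 hi
        omega
      simpa [hi] using hR.1 _ (List.getElem_mem hi)

lemma exists_finset_isNorming (φ : E →ₗᵢ[ℝ] LinfR n) :
    ∃ S : Finset (E →L[ℝ] ℝ), IsNorming (S : Set (E →L[ℝ] ℝ)) := by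
  classical
  refine ⟨Finset.univ.image fun i => PiLp.proj ⊤ (fun _ => ℝ) i ∘L φ.toContinuousLinearMap,
    fun f hf => ?_, fun x hx => ?_⟩
  · obtain ⟨i, -, rfl⟩ := Finset.mem_image.1 (Finset.mem_coe.1 hf)
    exact ContinuousLinearMap.opNorm_le_bound _ zero_le_one fun x => by
      simpa using PiLp.norm_apply_le (φ x) i
  · have : Nonempty (Fin n) := by
      by_contra hn
      rw [not_nonempty_iff] at hn
      exact hx (φ.injective (Subsingleton.elim _ _))
    obtain ⟨i, hi⟩ := exists_eq_ciSup_of_finite (f := fun i => ‖φ x i‖)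
    refine ⟨_, Finset.mem_coe.2 (Finset.mem_image_of_mem _ (Finset.mem_univ i)), ?_⟩
    rw [← φ.norm_map, PiLp.norm_eq_ciSup, ← hi]
    rfl

lemma finiteDimensional_of_linearIsometry_linfR (φ : E →ₗᵢ[ℝ] LinfR n) : FiniteDimensional ℝ E :=
  .of_injective φ.toLinearMap φ.injective

end Norming

section Discretization

variable {E F : Type*} [NormedAddCommGroup E] [NormedSpace ℝ E] [NormedAddCommGroup F]
  [NormedSpace ℝ F] {ε : ℝ} {D : ℕ → E →L[ℝ] ℝ} {a b k : ℕ} {R R' : List (F →L[ℝ] ℝ)}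

lemma norm_comp_linearIsometry_le (η : E →ₗᵢ[ℝ] F) (p : F →L[ℝ] ℝ) :
    ‖p ∘L η.toContinuousLinearMap‖ ≤ ‖p‖ :=
  ContinuousLinearMap.opNorm_le_bound _ (norm_nonneg p) fun x => by
    simpa using p.le_opNorm (η x)

lemma exists_comp_linearIsometry_eq (η : E →ₗᵢ[ℝ] F) (f : E →L[ℝ] ℝ) :
    ∃ p : F →L[ℝ] ℝ, p ∘L η.toContinuousLinearMap = f ∧ ‖p‖ ≤ ‖f‖ := by
  let e := η.equivRange
  obtain ⟨p, hp, hnorm⟩ := exists_extension_norm_eq (LinearMap.range η.toLinearMap)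
    (f ∘L (e.symm.toContinuousLinearEquiv : _ →L[ℝ] E))
  refine ⟨p, ContinuousLinearMap.ext fun x => ?_, hnorm.trans_le ?_⟩
  · simpa [e] using hp (e x)
  · exact ContinuousLinearMap.opNorm_le_bound _ (norm_nonneg f) fun y => by
      simpa using f.le_opNorm (e.symm y)

/-- The list `R` of functionals on `F` encodes isometries `η : E →ₗᵢ[ℝ] F` by parameter words: up
to `ε`, the functionals `p ∘ η` with `p ∈ R` are the `D t` for the successive letters `t` of a
parameter word with constants below `a` and parameters from `a` to `k - 1`. -/
def DiscretizesIsometries (ε : ℝ) (D : ℕ → E →L[ℝ] ℝ) (a k : ℕ) (R : List (F →L[ℝ] ℝ)) : Prop :=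
  ∀ η : E →ₗᵢ[ℝ] F, ∃ τ, ParameterWord a k τ ∧
    List.Forall₂ (fun p t => ‖p ∘L η.toContinuousLinearMap - D t‖ ≤ ε) R τ

namespace DiscretizesIsometries

lemma nil (ε : ℝ) (D : ℕ → E →L[ℝ] ℝ) (a : ℕ) :
    DiscretizesIsometries ε D a a ([] : List (F →L[ℝ] ℝ)) :=
  fun _ => ⟨[], .nil a, .nil⟩

lemma append (h : DiscretizesIsometries ε D a b R) (h' : DiscretizesIsometries ε D b k R') :
    DiscretizesIsometries ε D a k (R ++ R') := fun η => by
  obtain ⟨τ, hτ, hR⟩ := h η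
  obtain ⟨τ', hτ', hR'⟩ := h' η
  exact ⟨τ ++ τ', hτ.append hτ', List.rel_append hR hR'⟩

lemma of_forall_exists_lt {ρ : ℝ} (hR : ∀ p ∈ R, ‖p‖ ≤ ρ)
    (hD : ∀ f, ‖f‖ ≤ ρ → ∃ i < k, ‖f - D i‖ ≤ ε) : DiscretizesIsometries ε D k k R := fun η => by
  choose! letter hlt hclose using hD
  have hcomp (p : F →L[ℝ] ℝ) (hp : p ∈ R) : ‖p ∘L η.toContinuousLinearMap‖ ≤ ρ :=
    (norm_comp_linearIsometry_le η p).trans (hR p hp)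
  refine ⟨R.map fun p => letter (p ∘L η.toContinuousLinearMap), .of_forall_lt fun x hx => ?_, ?_⟩
  · obtain ⟨p, hp, rfl⟩ := List.mem_map.1 hx
    exact hlt _ (hcomp p hp)
  · exact List.forall₂_map_right_iff.2 (List.forall₂_same.2 fun p hp => hclose _ (hcomp p hp))

-- By Hahn–Banach some `p₀` with `‖p₀‖ ≤ ‖D k‖` restricts to `D k` along `η`, so the net point
-- next to `p₀` may take the new letter `k`; all other points take old letters.
lemma of_net (hR : ∀ p ∈ R, ‖p‖ ≤ ‖D k‖) (hnet : ∀ p : F →L[ℝ] ℝ, ‖p‖ ≤ ‖D k‖ →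
      ∃ p' ∈ R, ‖p - p'‖ ≤ ε)
    (hD : ∀ f, ‖f‖ ≤ ‖D k‖ → ∃ i < k, ‖f - D i‖ ≤ ε) :
    DiscretizesIsometries ε D k (k + 1) R := fun η => by
  classical
  choose! letter hlt hclose using hD
  have hcomp (p : F →L[ℝ] ℝ) (hp : p ∈ R) : ‖p ∘L η.toContinuousLinearMap‖ ≤ ‖D k‖ :=
    (norm_comp_linearIsometry_le η p).trans (hR p hp)
  obtain ⟨p₀, hp₀, hp₀_norm⟩ := exists_comp_linearIsometry_eq η (D k)
  obtain ⟨p₁, hp₁, hp₀₁⟩ := hnet p₀ hp₀_norm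
  have hp₁_close : ‖p₁ ∘L η.toContinuousLinearMap - D k‖ ≤ ε := by
    rw [← hp₀, ← ContinuousLinearMap.sub_comp]
    exact (norm_comp_linearIsometry_le η _).trans (norm_sub_rev p₀ p₁ ▸ hp₀₁)
  let g (p : F →L[ℝ] ℝ) : ℕ := if p = p₁ then k else letter (p ∘L η.toContinuousLinearMap)
  refine ⟨R.map g, .of_forall_lt_succ_of_mem (fun x hx => ?_) ?_, ?_⟩
  · obtain ⟨p, hp, rfl⟩ := List.mem_map.1 hx
    dsimp only [g]
    split_ifs
    exacts [k.lt_succ_self, (hlt _ (hcomp p hp)).trans k.lt_succ_self]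
  · exact List.mem_map.2 ⟨p₁, hp₁, if_pos rfl⟩
  · refine List.forall₂_map_right_iff.2 (List.forall₂_same.2 fun p hp => ?_)
    dsimp only [g]
    split_ifs with h
    exacts [h ▸ hp₁_close, hclose _ (hcomp p hp)]

end DiscretizesIsometries

lemma exists_discretizesIsometries [FiniteDimensional ℝ F] (hε : 0 < ε) {K : ℕ} (hK : 0 < K)
    (hD : ∀ i, ‖D i‖ ≤ 1)
    (hnet : ∀ k < K, 0 < k → ∀ f, ‖f‖ ≤ ‖D k‖ → ∃ i < k, ‖f - D i‖ ≤ ε) :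
    ∃ R : List (F →L[ℝ] ℝ), (∀ p ∈ R, ‖p‖ ≤ 1) ∧ DiscretizesIsometries ε D 1 K R := by
  have := FiniteDimensional.proper_real (F →L[ℝ] ℝ)
  induction K, hK using Nat.le_induction with
  | base => exact ⟨[], by simp, .nil ε D 1⟩
  | succ k hk ih =>
    obtain ⟨R, hR, hdisc⟩ := ih fun i hi => hnet i (hi.trans k.lt_succ_self)
    obtain ⟨t, ht, ht_net⟩ := exists_finset_net_closedBall (V := F →L[ℝ] ℝ) ‖D k‖ hε
    refine ⟨R ++ t.toList, fun p hp => ?_, hdisc.append (.of_net (by simpa using ht)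
      (by simpa using ht_net) (hnet k k.lt_succ_self hk))⟩
    rcases List.mem_append.1 hp with hp | hp
    exacts [hR p hp, (ht p (Finset.mem_toList.1 hp)).trans (hD k)]

lemma exists_isNorming_discretizesIsometries {d m : ℕ} (φ : E →ₗᵢ[ℝ] LinfR d)
    (ψ : F →ₗᵢ[ℝ] LinfR m) (hε : 0 < ε) :
    ∃ (D : ℕ → E →L[ℝ] ℝ) (K : ℕ) (R : List (F →L[ℝ] ℝ)), 0 < K ∧ D 0 = 0 ∧
      IsNorming (D '' Set.Iio K) ∧ IsNorming {p | p ∈ R} ∧ DiscretizesIsometries ε D 1 K R := by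
  have := finiteDimensional_of_linearIsometry_linfR φ
  have := finiteDimensional_of_linearIsometry_linfR ψ
  have := FiniteDimensional.proper_real (E →L[ℝ] ℝ)
  obtain ⟨S, hS⟩ := exists_finset_isNorming φ
  obtain ⟨T, hT⟩ := exists_finset_isNorming ψ
  obtain ⟨D, K, hK, hD₀, hD, hSD, hnet, hnet_lt⟩ := exists_norm_monotone_net hε hS.1
  obtain ⟨R, hR, hdisc⟩ := exists_discretizesIsometries (F := F) hε hK hD hnet_lt
  refine ⟨D, K, R ++ T.toList, hK, hD₀, hS.mono hSD (by rintro _ ⟨i, -, rfl⟩; exact hD i),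
    hT.mono (fun p hp => ?_) (fun p hp => ?_), hdisc.append
      (.of_forall_exists_lt (fun p hp => hT.1 p (Finset.mem_toList.1 hp)) hnet)⟩
  · exact List.mem_append_right R (Finset.mem_toList.2 hp)
  · exact (List.mem_append.1 hp).elim (hR p) fun hp => hT.1 p (Finset.mem_toList.1 hp)

end Discretization

section WordMap

variable {E F : Type*} [NormedAddCommGroup E] [NormedSpace ℝ E] [NormedAddCommGroup F]
  [NormedSpace ℝ F] {n : ℕ}

/-- The operator into `ℓ∞ⁿ` whose `i`-th coordinate functional is `D` at the `i`-th letter of `w`,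
where `w` is continued by zeros. -/
noncomputable def wordMap (n : ℕ) (D : ℕ → E →L[ℝ] ℝ) (w : List ℕ) : E →L[ℝ] LinfR n :=
  (PiLp.continuousLinearEquiv ⊤ ℝ (fun _ : Fin n => ℝ)).symm.toContinuousLinearMap ∘L
    ContinuousLinearMap.pi fun i => D (w.getD i 0)

lemma wordMap_apply (D : ℕ → E →L[ℝ] ℝ) (w : List ℕ) (x : E) (i : Fin n) :
    wordMap n D w x i = D (w.getD i 0) x := rfl

lemma norm_wordMap_apply {D : ℕ → E →L[ℝ] ℝ} {k : ℕ} {w : List ℕ} (hw : ParameterWord 1 k w)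
    (hlen : w.length = n) (hD₀ : D 0 = 0) (hD : IsNorming (D '' Set.Iio k)) (x : E) :
    ‖wordMap n D w x‖ = ‖x‖ := by
  subst hlen
  refine le_antisymm (norm_le_of_forall_abs_le (norm_nonneg x) fun i => ?_) ?_
  · have hi : D w[i] ∈ D '' Set.Iio k := ⟨_, hw.lt_of_mem (List.getElem_mem i.isLt), rfl⟩
    simpa [wordMap_apply] using (D w[i]).le_of_opNorm_le (hD.1 _ hi) x
  rcases eq_or_ne x 0 with rfl | hx
  · simp
  obtain ⟨_, ⟨t, htk, rfl⟩, htx⟩ := hD.2 x hx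
  have ht : t ≠ 0 := by
    rintro rfl
    simp [hD₀, hx] at htx
  obtain ⟨i, hi, rfl⟩ := List.getElem_of_mem (hw.mem (Nat.one_le_iff_ne_zero.2 ht) htk)
  refine htx.trans ?_
  simpa [wordMap_apply, hi] using PiLp.norm_apply_le (wordMap w.length D w x) ⟨i, hi⟩

lemma norm_wordMap_comp_sub_wordMap_le {D : ℕ → E →L[ℝ] ℝ} {R : List (F →L[ℝ] ℝ)}
    {τ : List ℕ} {ε : ℝ} (hε : 0 ≤ ε) (hD₀ : D 0 = 0) (η : E →ₗᵢ[ℝ] F)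
    (hR : List.Forall₂ (fun p t => ‖p ∘L η.toContinuousLinearMap - D t‖ ≤ ε) R τ) (σ : List ℕ) :
    ‖wordMap n (fun i => (0 :: R).getD i 0) σ ∘L η.toContinuousLinearMap -
      wordMap n D (σ.map (fill 1 τ))‖ ≤ ε := by
  have hrow (s : ℕ) :
      ‖(0 :: R).getD s 0 ∘L η.toContinuousLinearMap - D (fill 1 τ s)‖ ≤ ε := by
    rcases s with - | s
    · simpa [fill_of_lt, hD₀] using hε
    · rw [List.getD_cons_succ, fill_of_le τ (by omega), Nat.add_sub_cancel]
      rcases lt_or_ge s R.length with hs | hs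
      · simpa [hs, hR.length_eq ▸ hs] using hR.get hs (hR.length_eq ▸ hs)
      · simpa [hs, hR.length_eq ▸ hs, hD₀] using hε
  refine ContinuousLinearMap.opNorm_le_bound _ hε fun x =>
    norm_le_of_forall_abs_le (by positivity) fun i => ?_
  have hletter := List.getD_map σ 0 (n := i) (fill 1 τ)
  rw [fill_of_lt τ one_pos] at hletter
  have := ContinuousLinearMap.le_of_opNorm_le _ (hrow (σ.getD i 0)) x
  rw [← hletter] at this
  exact this

end WordMap

theorem arp_linf_real_general {E F : Type*} [NormedAddCommGroup E] [NormedSpace ℝ E]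
    [NormedAddCommGroup F] [NormedSpace ℝ F] {d m : ℕ} (φ : E →ₗᵢ[ℝ] LinfR d)
    (ψ : F →ₗᵢ[ℝ] LinfR m) (κ : Type*) [Finite κ] {ε : ℝ} (hε : 0 < ε) :
    ∃ n : ℕ, ∀ c : {φ : E →L[ℝ] LinfR n // ∀ x, ‖φ x‖ = ‖x‖} → κ,
      ∃ (γ : F →L[ℝ] LinfR n) (_ : ∀ x, ‖γ x‖ = ‖x‖) (j : κ),
        ∀ η : E →L[ℝ] F, (∀ x, ‖η x‖ = ‖x‖) →
          ∃ (ξ : E →L[ℝ] LinfR n) (hξ : ∀ x, ‖ξ x‖ = ‖x‖),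
            c ⟨ξ, hξ⟩ = j ∧ ‖γ.comp η - ξ‖ ≤ ε := by
  classical
  rcases isEmpty_or_nonempty κ with _ | _
  · exact ⟨d, fun c => isEmptyElim (c ⟨φ.toContinuousLinearMap, φ.norm_map⟩)⟩
  obtain ⟨D, K, R, hK, hD₀, hD, hR, hdisc⟩ := exists_isNorming_discretizesIsometries φ ψ hε
  obtain ⟨n, hn⟩ := grahamRothschildProperty one_pos hK R.length κ
  refine ⟨n, fun c => ?_⟩
  obtain ⟨σ, hσ, hlen, j, hj⟩ := hn fun w =>
    if h : ∀ x, ‖wordMap n D w x‖ = ‖x‖ then c ⟨_, h⟩ else Classical.arbitrary κ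
  refine ⟨wordMap n (fun i => (0 :: R).getD i 0) σ,
    norm_wordMap_apply hσ hlen rfl hR.image_getD_cons_zero, j, fun η hη => ?_⟩
  obtain ⟨τ, hτ, hRτ⟩ := hdisc ⟨η.toLinearMap, hη⟩
  have hξ : ∀ x, ‖wordMap n D (σ.map (fill 1 τ)) x‖ = ‖x‖ :=
    norm_wordMap_apply (hσ.map_fill hτ (by rw [hRτ.length_eq])) (by simpa) hD₀ hD
  exact ⟨_, hξ, (dif_pos hξ).symm.trans (hj τ hτ hRτ.length_eq.symm),
    norm_wordMap_comp_sub_wordMap_le hε.le hD₀ _ hRτ σ⟩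

/-- Approximate Ramsey property of the family `{ℓ∞ⁿ(ℝ)}ₙ` with respect to linear isometric
embeddings. -/
theorem arp_linf_real (d m r : ℕ) (ε : ℝ) (hε : 0 < ε) :
    ∃ n : ℕ, ∀ c : {φ : LinfR d →L[ℝ] LinfR n // ∀ x, ‖φ x‖ = ‖x‖} → Fin r,
      ∃ (γ : LinfR m →L[ℝ] LinfR n) (_ : ∀ x, ‖γ x‖ = ‖x‖) (j : Fin r),
        ∀ η : LinfR d →L[ℝ] LinfR m, (∀ x, ‖η x‖ = ‖x‖) →
          ∃ (ξ : LinfR d →L[ℝ] LinfR n) (hξ : ∀ x, ‖ξ x‖ = ‖x‖),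
            c ⟨ξ, hξ⟩ = j ∧ ‖γ.comp η - ξ‖ ≤ ε :=
  arp_linf_real_general LinearIsometry.id LinearIsometry.id (Fin r) hε
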